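/- Let h : [0,∞) → ℝ be a C¹ increasing function with h(0) > 0 and lim_{t→∞} h(t)/t^{p−1} = +∞. Then there exists λ* ∈ (0, ∞) such that: (i) for every λ ∈ (0, λ*) there exists a radial Dirichlet solution of the problem with parameter λ; and (ii) for every λ > λ* there exists no radial Dirichlet solution of the problem with parameter λ. -/

import Mathlib

open MeasureTheory Set Filter

/-!
In divergence form the equation reads `-(a |u'|^{p-2} u')' = λ a h(u)` with `a = ψ^{N-1}`. The set
of parameters admitting a radial Dirichlet solution is shown to be a nonempty bounded interval
with left end `0`; then `λ*` is its supremum.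

* Solutions may be singular at the origin, so the solution operator
  `(solve v)(r) = ∫_r^1 ((λ / a(s)) ∫_0^s a h(v) dt)^{1/(p-1)} ds` is considered on functions `v`
  that are only continuous on `(0, 1]` with `a h(v)` integrable. It is monotone in `v` and in `λ`.
  The iteration started at `0` converges to a fixed point below any supersolution
  `solve w ≤ w` (`exists_fixed`), and fixed points are classical solutions (`isSol_of_fixed`).
* Every solution `u` is strictly decreasing (`IsSol.deriv_neg`), so its outward flux at radius `s`
  is at least `λ ∫_0^s a h(u)`, and integrating gives `solve u ≤ u` (`IsSol.super`). For a smaller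
  parameter `u` remains a supersolution, so solvability passes to smaller parameters
  (`IsSol.down`).
* Since `ψ(r)` is comparable to `r`, the constant `1` is a supersolution for a small parameter
  (`exists_isSol_small`).
* Superlinearity and `h(0) > 0` give `h(t) ≥ m t^{p-1}` with `m > 0`. Inserted in `solve u ≤ u` at
  radius `1/2`, this yields `u(1/2) ≥ const · λ^{1/(p-1)} u(1/2)`, which bounds `λ`
  (`bddAbove_lam`).
-/

namespace Gelfand

/-! ### The solution operator -/

/-- The data of the radial problem after writing it in divergence form: `a` is the area density
`ψ ^ (N - 1)` of geodesic spheres, `h` the nonlinearity, and `q = 1 / (p - 1)`. -/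
structure Data (a h : ℝ → ℝ) (q : ℝ) : Prop where
  a_cont : ContinuousOn a (Icc 0 1)
  a_pos : ∀ s ∈ Ioc (0:ℝ) 1, 0 < a s
  h_cont : ContinuousOn h (Ici 0)
  h_mono : MonotoneOn h (Ici 0)
  h_zero : 0 < h 0
  q_pos : 0 < q

/-- The total source `∫₀ˢ a h(v)` inside the ball of radius `s`. -/
noncomputable def flux (a h v : ℝ → ℝ) (s : ℝ) : ℝ := ∫ t in (0:ℝ)..s, a t * h (v t)

/-- The steepness `-w'(s)` at radius `s` of the solution `w` of `-(a |w'|^{p-2} w')' = lam a h(v)`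
with zero flux at the origin, where `q = 1 / (p - 1)`. -/
noncomputable def steep (a h : ℝ → ℝ) (q lam : ℝ) (v : ℝ → ℝ) (s : ℝ) : ℝ :=
  (lam * flux a h v s / a s) ^ q

/-- The solution operator: `solve v` has steepness `steep v` and vanishes at radius `1`. Its fixed
points are radial Dirichlet solutions. -/
noncomputable def solve (a h : ℝ → ℝ) (q lam : ℝ) (v : ℝ → ℝ) (r : ℝ) : ℝ :=
  ∫ s in r..1, steep a h q lam v s

/-- Functions on which the solution operator is well defined. The value at the origin is
irrelevant, so that functions unbounded near the origin are included. -/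
structure Adm (a h v : ℝ → ℝ) : Prop where
  cont : ContinuousOn v (Ioc 0 1)
  nonneg : ∀ r ∈ Ioc (0:ℝ) 1, 0 ≤ v r
  int : IntegrableOn (fun t => a t * h (v t)) (Ioc 0 1)

variable {a h v w : ℝ → ℝ} {q lam mu : ℝ}

lemma Data.h_pos (D : Data a h q) {t : ℝ} (ht : 0 ≤ t) : 0 < h t :=
  D.h_zero.trans_le (D.h_mono (mem_Ici.2 le_rfl) ht ht)

lemma Data.source_cont (D : Data a h q) (hc : ContinuousOn v (Ioc 0 1))
    (h0 : ∀ r ∈ Ioc (0:ℝ) 1, 0 ≤ v r) : ContinuousOn (fun t => a t * h (v t)) (Ioc 0 1) :=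
  (D.a_cont.mono Ioc_subset_Icc_self).mul (D.h_cont.comp hc h0)

lemma Data.source_pos (D : Data a h q) (h0 : ∀ r ∈ Ioc (0:ℝ) 1, 0 ≤ v r) {t : ℝ}
    (ht : t ∈ Ioc (0:ℝ) 1) : 0 < a t * h (v t) :=
  mul_pos (D.a_pos t ht) (D.h_pos (h0 t ht))

lemma intervalIntegrable_of_int {f : ℝ → ℝ} (hf : IntegrableOn f (Ioc 0 1)) {r s : ℝ}
    (hr : 0 ≤ r) (hrs : r ≤ s) (hs : s ≤ 1) : IntervalIntegrable f volume r s :=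
  (intervalIntegrable_iff_integrableOn_Ioc_of_le hrs).2 (hf.mono_set (Ioc_subset_Ioc hr hs))

lemma flux_cont (hv : IntegrableOn (fun t => a t * h (v t)) (Ioc 0 1)) :
    ContinuousOn (flux a h v) (Icc 0 1) := by
  have := intervalIntegral.continuousOn_primitive_interval (a := (0:ℝ)) (b := 1) (μ := volume)
    (f := fun t => a t * h (v t))
    (by rw [uIcc_of_le zero_le_one]; exact (integrableOn_Icc_iff_integrableOn_Ioc enorm_ne_top).2 hv)
  rwa [uIcc_of_le zero_le_one] at this

lemma flux_pos (D : Data a h q) (hv : Adm a h v) {s : ℝ} (hs : s ∈ Ioc (0:ℝ) 1) :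
    0 < flux a h v s :=
  intervalIntegral.intervalIntegral_pos_of_pos_on
    (intervalIntegrable_of_int hv.int le_rfl hs.1.le hs.2)
    (fun _ ht => D.source_pos hv.nonneg ⟨ht.1, ht.2.le.trans hs.2⟩) hs.1

lemma flux_mono_fun (D : Data a h q) (hv : Adm a h v) (hw : Adm a h w)
    (hvw : ∀ r ∈ Ioc (0:ℝ) 1, v r ≤ w r) {s : ℝ} (hs : s ∈ Ioc (0:ℝ) 1) :
    flux a h v s ≤ flux a h w s := by
  refine intervalIntegral.integral_mono_on_of_le_Ioo hs.1.le
    (intervalIntegrable_of_int hv.int le_rfl hs.1.le hs.2)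
    (intervalIntegrable_of_int hw.int le_rfl hs.1.le hs.2) fun t ht => ?_
  have ht' : t ∈ Ioc (0:ℝ) 1 := ⟨ht.1, ht.2.le.trans hs.2⟩
  exact mul_le_mul_of_nonneg_left
    (D.h_mono (hv.nonneg t ht') (hw.nonneg t ht') (hvw t ht')) (D.a_pos t ht').le

lemma flux_mono_radius (D : Data a h q) (hv : Adm a h v) {r s : ℝ} (hr : 0 < r) (hrs : r ≤ s)
    (hs : s ≤ 1) : flux a h v r ≤ flux a h v s := by
  have h1 : flux a h v r + ∫ t in r..s, a t * h (v t) = flux a h v s :=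
    intervalIntegral.integral_add_adjacent_intervals
      (intervalIntegrable_of_int hv.int le_rfl hr.le (hrs.trans hs))
      (intervalIntegrable_of_int hv.int hr.le hrs hs)
  have h2 : 0 ≤ ∫ t in r..s, a t * h (v t) :=
    intervalIntegral.integral_nonneg hrs fun t ht =>
      (D.source_pos hv.nonneg ⟨hr.trans_le ht.1, ht.2.trans hs⟩).le
  linarith

lemma flux_hasDerivAt (D : Data a h q) (hv : Adm a h v) {s : ℝ} (hs : s ∈ Ioo (0:ℝ) 1) :
    HasDerivAt (flux a h v) (a s * h (v s)) s := by
  have hc : ContinuousOn (fun t => a t * h (v t)) (Ioo 0 1) :=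
    (D.source_cont hv.cont hv.nonneg).mono Ioo_subset_Ioc_self
  exact intervalIntegral.integral_hasDerivAt_right
    (intervalIntegrable_of_int hv.int le_rfl hs.1.le hs.2.le)
    (hc.stronglyMeasurableAtFilter isOpen_Ioo s hs) (hc.continuousAt (isOpen_Ioo.mem_nhds hs))

lemma steep_pos (D : Data a h q) (hlam : 0 < lam) (hv : Adm a h v) {s : ℝ}
    (hs : s ∈ Ioc (0:ℝ) 1) : 0 < steep a h q lam v s :=
  Real.rpow_pos_of_pos (div_pos (mul_pos hlam (flux_pos D hv hs)) (D.a_pos s hs)) _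

lemma steep_cont (D : Data a h q)
    (hv : IntegrableOn (fun t => a t * h (v t)) (Ioc 0 1)) :
    ContinuousOn (steep a h q lam v) (Ioc 0 1) := by
  refine ContinuousOn.rpow_const ?_ fun s _ => Or.inr D.q_pos.le
  exact (continuousOn_const.mul ((flux_cont hv).mono Ioc_subset_Icc_self)).div
    (D.a_cont.mono Ioc_subset_Icc_self) fun s hs => (D.a_pos s hs).ne'

lemma steep_mono (D : Data a h q) (hmu : 0 < mu) (hml : mu ≤ lam) (hv : Adm a h v)
    (hw : Adm a h w) (hvw : ∀ r ∈ Ioc (0:ℝ) 1, v r ≤ w r) {s : ℝ} (hs : s ∈ Ioc (0:ℝ) 1) :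
    steep a h q mu v s ≤ steep a h q lam w s := by
  have h1 := flux_pos D hv hs
  have h2 := D.a_pos s hs
  have h3 := flux_mono_fun D hv hw hvw hs
  have h4 : 0 ≤ lam := hmu.le.trans hml
  refine Real.rpow_le_rpow (by positivity) ?_ D.q_pos.le
  gcongr

lemma steep_intervalIntegrable (D : Data a h q)
    (hv : IntegrableOn (fun t => a t * h (v t)) (Ioc 0 1)) {r s : ℝ}
    (hr : 0 < r) (hrs : r ≤ s) (hs : s ≤ 1) :
    IntervalIntegrable (steep a h q lam v) volume r s := by
  refine ((steep_cont D hv).mono ?_).intervalIntegrable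
  rw [uIcc_of_le hrs]
  exact fun t ht => ⟨hr.trans_le ht.1, ht.2.trans hs⟩

lemma solve_mono (D : Data a h q) (hmu : 0 < mu) (hml : mu ≤ lam) (hv : Adm a h v)
    (hw : Adm a h w) (hvw : ∀ r ∈ Ioc (0:ℝ) 1, v r ≤ w r) {r : ℝ} (hr : r ∈ Ioc (0:ℝ) 1) :
    solve a h q mu v r ≤ solve a h q lam w r :=
  intervalIntegral.integral_mono_on hr.2 (steep_intervalIntegrable D hv.int hr.1 hr.2 le_rfl)
    (steep_intervalIntegrable D hw.int hr.1 hr.2 le_rfl) fun _ hs =>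
      steep_mono D hmu hml hv hw hvw ⟨hr.1.trans_le hs.1, hs.2⟩

lemma solve_nonneg (D : Data a h q) (hlam : 0 < lam) (hv : Adm a h v) {r : ℝ}
    (hr : r ∈ Ioc (0:ℝ) 1) : 0 ≤ solve a h q lam v r :=
  intervalIntegral.integral_nonneg hr.2 fun _ hs =>
    (steep_pos D hlam hv ⟨hr.1.trans_le hs.1, hs.2⟩).le

lemma solve_pos (D : Data a h q) (hlam : 0 < lam) (hv : Adm a h v) {r : ℝ}
    (hr : r ∈ Ioo (0:ℝ) 1) : 0 < solve a h q lam v r :=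
  intervalIntegral.intervalIntegral_pos_of_pos_on
    (steep_intervalIntegrable D hv.int hr.1 hr.2.le le_rfl)
    (fun _ hs => steep_pos D hlam hv ⟨hr.1.trans hs.1, hs.2.le⟩) hr.2

lemma solve_cont (D : Data a h q)
    (hv : IntegrableOn (fun t => a t * h (v t)) (Ioc 0 1)) :
    ContinuousOn (solve a h q lam v) (Ioc 0 1) := by
  intro r hr
  have hr2 : 0 < r / 2 := half_pos hr.1
  have hle : r / 2 ≤ 1 := by linarith [hr.2, hr.1]
  have h1 := intervalIntegral.continuousOn_primitive_interval_left (a := r / 2) (b := 1)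
    (μ := volume) (f := steep a h q lam v) (by
      rw [uIcc_of_le hle]
      exact ((steep_cont D hv).mono fun t ht => ⟨hr2.trans_le ht.1, ht.2⟩).integrableOn_Icc)
  rw [uIcc_of_le hle] at h1
  refine (h1 r ⟨by linarith [hr.1], hr.2⟩).mono_of_mem_nhdsWithin ?_
  have : Ioi (r / 2) ∈ nhds r := Ioi_mem_nhds (by linarith [hr.1])
  filter_upwards [mem_nhdsWithin_of_mem_nhds this, self_mem_nhdsWithin] with t ht1 ht2
  exact ⟨le_of_lt ht1, ht2.2⟩

lemma solve_hasDerivAt (D : Data a h q) (hv : Adm a h v) {r : ℝ} (hr : r ∈ Ioo (0:ℝ) 1) :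
    HasDerivAt (solve a h q lam v) (-steep a h q lam v r) r := by
  have hc : ContinuousOn (steep a h q lam v) (Ioo 0 1) :=
    (steep_cont D hv.int).mono Ioo_subset_Ioc_self
  exact intervalIntegral.integral_hasDerivAt_left
    (steep_intervalIntegrable D hv.int hr.1 hr.2.le le_rfl)
    (hc.stronglyMeasurableAtFilter isOpen_Ioo r hr) (hc.continuousAt (isOpen_Ioo.mem_nhds hr))

/-- Continuous functions squeezed below an admissible function are admissible. -/
lemma Adm.of_le (D : Data a h q) (hw : Adm a h w) (hc : ContinuousOn v (Ioc 0 1))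
    (h0 : ∀ r ∈ Ioc (0:ℝ) 1, 0 ≤ v r) (hvw : ∀ r ∈ Ioc (0:ℝ) 1, v r ≤ w r) : Adm a h v := by
  refine ⟨hc, h0, Integrable.mono' hw.int
    ((D.source_cont hc h0).aestronglyMeasurable measurableSet_Ioc) ?_⟩
  refine (ae_restrict_mem measurableSet_Ioc).mono fun t ht => ?_
  rw [Real.norm_of_nonneg (D.source_pos h0 ht).le]
  exact mul_le_mul_of_nonneg_left (D.h_mono (h0 t ht) (hw.nonneg t ht) (hvw t ht))
    (D.a_pos t ht).le

/-! ### Monotone iteration below a supersolution -/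

/-- The monotone iteration `0, solve 0, solve (solve 0), …`. -/
noncomputable def iter (a h : ℝ → ℝ) (q lam : ℝ) : ℕ → ℝ → ℝ
  | 0 => fun _ => 0
  | k + 1 => solve a h q lam (iter a h q lam k)

lemma iter_spec (D : Data a h q) (hlam : 0 < lam) (hw : Adm a h w)
    (hsup : ∀ r ∈ Ioc (0:ℝ) 1, solve a h q lam w r ≤ w r) (k : ℕ) :
    Adm a h (iter a h q lam k) ∧ (∀ r ∈ Ioc (0:ℝ) 1, iter a h q lam k r ≤ w r) := by
  induction k with
  | zero => exact ⟨hw.of_le D continuousOn_const (fun _ _ => le_rfl) hw.nonneg, hw.nonneg⟩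
  | succ k ih =>
    have hle : ∀ r ∈ Ioc (0:ℝ) 1, iter a h q lam (k + 1) r ≤ w r := fun r hr =>
      (solve_mono D hlam le_rfl ih.1 hw ih.2 hr).trans (hsup r hr)
    exact ⟨hw.of_le D (solve_cont D ih.1.int) (fun r hr => solve_nonneg D hlam ih.1 hr) hle, hle⟩

lemma iter_mono (D : Data a h q) (hlam : 0 < lam) (hw : Adm a h w)
    (hsup : ∀ r ∈ Ioc (0:ℝ) 1, solve a h q lam w r ≤ w r) (k : ℕ) :
    ∀ r ∈ Ioc (0:ℝ) 1, iter a h q lam k r ≤ iter a h q lam (k + 1) r := by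
  induction k with
  | zero => exact fun r hr => solve_nonneg D hlam (iter_spec D hlam hw hsup 0).1 hr
  | succ k ih =>
    exact fun r hr => solve_mono D hlam le_rfl (iter_spec D hlam hw hsup k).1
      (iter_spec D hlam hw hsup (k + 1)).1 ih hr

/-- A supersolution, possibly unbounded at the origin, yields a fixed point of the solution
operator: the monotone iteration started at `0` stays below it, and its limit is a fixed point by
dominated convergence. -/
lemma exists_fixed (D : Data a h q) (hlam : 0 < lam) (hw : Adm a h w)
    (hsup : ∀ r ∈ Ioc (0:ℝ) 1, solve a h q lam w r ≤ w r) :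
    ∃ v, Adm a h v ∧ ∀ r ∈ Ioc (0:ℝ) 1, solve a h q lam v r = v r := by
  set V := iter a h q lam with hV
  have hA : ∀ k, Adm a h (V k) := fun k => (iter_spec D hlam hw hsup k).1
  have hle : ∀ k, ∀ r ∈ Ioc (0:ℝ) 1, V k r ≤ w r := fun k => (iter_spec D hlam hw hsup k).2
  have hm : ∀ r ∈ Ioc (0:ℝ) 1, Monotone fun k => V k r := fun r hr =>
    monotone_nat_of_le_succ fun k => iter_mono D hlam hw hsup k r hr
  let v : ℝ → ℝ := fun r => ⨆ k, V k r
  have hlim : ∀ r ∈ Ioc (0:ℝ) 1, Tendsto (fun k => V k r) atTop (nhds (v r)) := fun r hr =>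
    tendsto_atTop_ciSup (hm r hr) ⟨w r, by rintro _ ⟨k, rfl⟩; exact hle k r hr⟩
  have hv0 : ∀ r ∈ Ioc (0:ℝ) 1, 0 ≤ v r := fun r hr =>
    ge_of_tendsto' (hlim r hr) fun k => (hA k).nonneg r hr
  have hvw : ∀ r ∈ Ioc (0:ℝ) 1, v r ≤ w r := fun r hr =>
    le_of_tendsto' (hlim r hr) fun k => hle k r hr
  have hsrc : ∀ r ∈ Ioc (0:ℝ) 1,
      Tendsto (fun k => a r * h (V k r)) atTop (nhds (a r * h (v r))) := fun r hr => by
    refine Tendsto.const_mul _ ?_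
    refine ((D.h_cont (v r) (hv0 r hr)).tendsto).comp ?_
    exact tendsto_nhdsWithin_iff.2 ⟨hlim r hr, Eventually.of_forall fun k => (hA k).nonneg r hr⟩
  have hflux : ∀ s ∈ Ioc (0:ℝ) 1,
      Tendsto (fun k => flux a h (V k) s) atTop (nhds (flux a h v s)) := fun s hs => by
    have hsub : uIoc 0 s ⊆ Ioc (0:ℝ) 1 := by
      rw [uIoc_of_le hs.1.le]; exact Ioc_subset_Ioc le_rfl hs.2
    refine intervalIntegral.tendsto_integral_filter_of_dominated_convergence
      (fun t => a t * h (w t)) (Eventually.of_forall fun k => ?_)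
      (Eventually.of_forall fun k => Eventually.of_forall fun t ht => ?_)
      (intervalIntegrable_of_int hw.int le_rfl hs.1.le hs.2)
      (Eventually.of_forall fun t ht => hsrc t (hsub ht))
    · exact ((hA k).int.mono_set hsub).aestronglyMeasurable
    · rw [Real.norm_of_nonneg (D.source_pos (hA k).nonneg (hsub ht)).le]
      exact mul_le_mul_of_nonneg_left (D.h_mono ((hA k).nonneg t (hsub ht))
        (hw.nonneg t (hsub ht)) (hle k t (hsub ht))) (D.a_pos t (hsub ht)).le
  have hsteep : ∀ s ∈ Ioc (0:ℝ) 1,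
      Tendsto (fun k => steep a h q lam (V k) s) atTop (nhds (steep a h q lam v s)) :=
    fun s hs => (((hflux s hs).const_mul lam).div_const (a s)).rpow_const (Or.inr D.q_pos.le)
  have hfix : ∀ r ∈ Ioc (0:ℝ) 1, solve a h q lam v r = v r := fun r hr => by
    have hsub : uIoc r 1 ⊆ Ioc (0:ℝ) 1 := by
      rw [uIoc_of_le hr.2]; exact Ioc_subset_Ioc hr.1.le le_rfl
    have h1 : Tendsto (fun k => V (k + 1) r) atTop (nhds (solve a h q lam v r)) := by
      refine intervalIntegral.tendsto_integral_filter_of_dominated_convergence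
        (steep a h q lam w) (Eventually.of_forall fun k => ?_)
        (Eventually.of_forall fun k => Eventually.of_forall fun t ht => ?_)
        (steep_intervalIntegrable D hw.int hr.1 hr.2 le_rfl)
        (Eventually.of_forall fun t ht => hsteep t (hsub ht))
      · exact ((steep_cont D (hA k).int).mono hsub).aestronglyMeasurable measurableSet_uIoc
      · rw [Real.norm_of_nonneg (steep_pos D hlam (hA k) (hsub ht)).le]
        exact steep_mono D hlam le_rfl (hA k) hw (hle k) (hsub ht)
    exact tendsto_nhds_unique h1 ((tendsto_add_atTop_iff_nat 1).2 (hlim r hr))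
  have hvint : IntegrableOn (fun t => a t * h (v t)) (Ioc 0 1) := by
    refine Integrable.mono' hw.int (aestronglyMeasurable_of_tendsto_ae atTop
      (fun k => (hA k).int.aestronglyMeasurable)
      ((ae_restrict_mem measurableSet_Ioc).mono hsrc)) ?_
    refine (ae_restrict_mem measurableSet_Ioc).mono fun t ht => ?_
    rw [Real.norm_of_nonneg (D.source_pos hv0 ht).le]
    exact mul_le_mul_of_nonneg_left (D.h_mono (hv0 t ht) (hw.nonneg t ht) (hvw t ht))
      (D.a_pos t ht).le
  exact ⟨v, ⟨(solve_cont D hvint).congr fun r hr => (hfix r hr).symm, hv0, hvint⟩, hfix⟩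


/-! ### Radial Dirichlet solutions and the solution operator -/

/-- The area density `ψ ^ (N - 1)` of geodesic spheres, up to a constant factor. -/
def area (ψ : ℝ → ℝ) (N : ℕ) (r : ℝ) : ℝ := ψ r ^ (N - 1)

/-- `u` is a radial Dirichlet solution of the problem with parameter `lam`. -/
def IsSol (N : ℕ) (p : ℝ) (ψ h : ℝ → ℝ) (lam : ℝ) (u : ℝ → ℝ) : Prop :=
  ContDiffOn ℝ 2 u (Set.Ioo 0 1) ∧
  (∀ r ∈ Set.Ioo (0:ℝ) 1, 0 < u r) ∧
  ContinuousOn u (Set.Ioc 0 1) ∧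
  u 1 = 0 ∧
  ∀ r ∈ Set.Ioo (0:ℝ) 1,
    -(p - 1) * |deriv u r| ^ (p - 2) * deriv (deriv u) r
      - ((N : ℝ) - 1) * (deriv ψ r / ψ r) * |deriv u r| ^ (p - 2) * deriv u r
      = lam * h (u r)

variable {N : ℕ} {p : ℝ} {ψ u : ℝ → ℝ}

lemma area_hasDerivAt (hN : 2 ≤ N) {r : ℝ} (hd : DifferentiableAt ℝ ψ r) (hr : 0 < ψ r) :
    HasDerivAt (area ψ N) (((N:ℝ) - 1) * (deriv ψ r / ψ r) * area ψ N r) r := by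
  obtain ⟨n, rfl⟩ : ∃ n, N = n + 2 := ⟨N - 2, by omega⟩
  have := hd.hasDerivAt.pow (n + 1)
  refine (this.congr_deriv ?_)
  simp only [area, Nat.add_one_sub_one]
  push_cast
  field_simp
  ring

/-- A fixed point of the solution operator is a radial Dirichlet solution. -/
lemma isSol_of_fixed (hN : 2 ≤ N) (hp1 : 1 < p) (hψ : ContDiffOn ℝ 1 ψ (Ioo 0 1))
    (hψpos : ∀ r ∈ Ioo (0:ℝ) 1, 0 < ψ r) (D : Data (area ψ N) h (1 / (p - 1))) (hlam : 0 < lam)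
    (hv : Adm (area ψ N) h v)
    (hfix : ∀ r ∈ Ioc (0:ℝ) 1, solve (area ψ N) h (1 / (p - 1)) lam v r = v r) :
    IsSol N p ψ h lam v := by
  have hp : 0 < p - 1 := by linarith
  set a := area ψ N with ha
  set q := 1 / (p - 1) with hq
  have hsub : Ioo (0:ℝ) 1 ⊆ Ioc 0 1 := Ioo_subset_Ioc_self
  have hapos : ∀ r ∈ Ioo (0:ℝ) 1, 0 < a r := fun r hr => D.a_pos r (hsub hr)
  have hψd : ∀ r ∈ Ioo (0:ℝ) 1, DifferentiableAt ℝ ψ r := fun r hr =>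
    (hψ.differentiableOn one_ne_zero).differentiableAt (isOpen_Ioo.mem_nhds hr)
  have haC : ContDiffOn ℝ 1 a (Ioo 0 1) := hψ.pow (N - 1)
  have hvd : ∀ r ∈ Ioo (0:ℝ) 1, HasDerivAt v (-steep a h q lam v r) r := fun r hr => by
    refine (solve_hasDerivAt D hv hr).congr_of_eventuallyEq ?_
    filter_upwards [isOpen_Ioo.mem_nhds hr] with s hs using (hfix s (hsub hs)).symm
  have hFC : ContDiffOn ℝ 1 (flux a h v) (Ioo 0 1) := by
    rw [show (1 : WithTop ℕ∞) = 0 + 1 by norm_num, contDiffOn_succ_iff_deriv_of_isOpen isOpen_Ioo]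
    refine ⟨fun s hs => (flux_hasDerivAt D hv hs).differentiableAt.differentiableWithinAt,
      by simp, ?_⟩
    rw [contDiffOn_zero]
    exact ((D.source_cont hv.cont hv.nonneg).mono hsub).congr fun s hs =>
      (flux_hasDerivAt D hv hs).deriv
  have hKC : ContDiffOn ℝ 1 (steep a h q lam v) (Ioo 0 1) := by
    refine ContDiffOn.rpow_const_of_ne
      ((contDiffOn_const.mul hFC).div haC fun s hs => (hapos s hs).ne') fun s hs => ?_
    exact (div_pos (mul_pos hlam (flux_pos D hv (hsub hs))) (hapos s hs)).ne'
  have hderiv : ∀ r ∈ Ioo (0:ℝ) 1, deriv v r = -steep a h q lam v r := fun r hr => (hvd r hr).deriv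
  refine ⟨?_, fun r hr => ?_, hv.cont, ?_, fun r hr => ?_⟩
  · rw [show (2 : WithTop ℕ∞) = 1 + 1 by norm_num, contDiffOn_succ_iff_deriv_of_isOpen isOpen_Ioo]
    exact ⟨fun s hs => (hvd s hs).differentiableAt.differentiableWithinAt, by simp,
      hKC.neg.congr hderiv⟩
  · rw [← hfix r (hsub hr)]
    exact solve_pos D hlam hv hr
  · rw [← hfix 1 ⟨one_pos, le_rfl⟩]
    simp [solve]
  · have hK := steep_pos D hlam hv (hsub hr)
    have hKd : HasDerivAt (steep a h q lam v) (deriv (steep a h q lam v) r) r :=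
      ((hKC.differentiableOn one_ne_zero).differentiableAt (isOpen_Ioo.mem_nhds hr)).hasDerivAt
    have hdd : deriv (deriv v) r = -deriv (steep a h q lam v) r := by
      have : deriv v =ᶠ[nhds r] fun s => -steep a h q lam v s := by
        filter_upwards [isOpen_Ioo.mem_nhds hr] with s hs using hderiv s hs
      rw [this.deriv_eq]
      exact hKd.neg.deriv
    -- The equation is obtained by differentiating `steep ^ (p - 1) = lam * flux / a` in two ways.
    have hpow : ∀ s ∈ Ioo (0:ℝ) 1, steep a h q lam v s ^ (p - 1) = lam * flux a h v s / a s := by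
      intro s hs
      have : 0 < lam * flux a h v s / a s :=
        div_pos (mul_pos hlam (flux_pos D hv (hsub hs))) (hapos s hs)
      rw [steep, ← Real.rpow_mul this.le, hq, one_div_mul_cancel hp.ne', Real.rpow_one]
    have hd1 := hKd.rpow_const (p := p - 1) (Or.inl hK.ne')
    have hd2 := ((flux_hasDerivAt D hv hr).const_mul lam).div
      (area_hasDerivAt hN (hψd r hr) (hψpos r hr)) (hapos r hr).ne'
    have heq := hd1.unique (hd2.congr_of_eventuallyEq (by
      filter_upwards [isOpen_Ioo.mem_nhds hr] with s hs using hpow s hs))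
    have hpow' := hpow r hr
    have hsplit : steep a h q lam v r ^ (p - 1)
        = steep a h q lam v r ^ (p - 2) * steep a h q lam v r := by
      rw [show p - 1 = (p - 2) + 1 by ring, Real.rpow_add hK, Real.rpow_one]
    rw [hdd, hderiv r hr, abs_neg, abs_of_pos hK]
    rw [show p - 1 - 1 = p - 2 by ring] at heq
    rw [hsplit] at hpow'
    have har := hapos r hr
    rw [← ha] at heq
    have e1 : (lam * (a r * h (v r)) * a r
        - lam * flux a h v r * ((↑N - 1) * (deriv ψ r / ψ r) * a r)) / a r ^ 2
        = lam * h (v r) - (lam * flux a h v r / a r) * ((↑N - 1) * (deriv ψ r / ψ r)) := by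
      field_simp
    rw [e1, ← hpow'] at heq
    linear_combination heq

/-- A radial Dirichlet solution is strictly decreasing. If `p ≠ 2` the equation fails at critical
points; if `p = 2`, a nonnegative slope somewhere gives an inward flux `ψ^{N-1} u' ≥ c > 0` near
the origin, so that `u' ≥ c / r` there and `u` would be unbounded below. -/
lemma IsSol.deriv_neg (hN : 2 ≤ N) (hψ : ContDiffOn ℝ 1 ψ (Ioo 0 1))
    (hψpos : ∀ r ∈ Ioo (0:ℝ) 1, 0 < ψ r) {C : ℝ} (hC : ∀ r ∈ Ioo (0:ℝ) 1, ψ r ≤ C * r)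
    (D : Data (area ψ N) h q) (hlam : 0 < lam)
    (hu : IsSol N p ψ h lam u) {r : ℝ} (hr : r ∈ Ioo (0:ℝ) 1) : deriv u r < 0 := by
  obtain ⟨hu2, hupos, huc, hu1, hueq⟩ := hu
  have hu' : ContDiffOn ℝ 1 (deriv u) (Ioo 0 1) := by
    rw [show (2 : WithTop ℕ∞) = 1 + 1 by norm_num,
      contDiffOn_succ_iff_deriv_of_isOpen isOpen_Ioo] at hu2
    exact hu2.2.2
  have hud : ∀ s ∈ Ioo (0:ℝ) 1, HasDerivAt u (deriv u s) s := fun s hs =>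
    ((hu2.differentiableOn two_ne_zero).differentiableAt (isOpen_Ioo.mem_nhds hs)).hasDerivAt
  have hudd : ∀ s ∈ Ioo (0:ℝ) 1, HasDerivAt (deriv u) (deriv (deriv u) s) s := fun s hs =>
    ((hu'.differentiableOn one_ne_zero).differentiableAt (isOpen_Ioo.mem_nhds hs)).hasDerivAt
  by_contra hcon
  rw [not_lt] at hcon
  by_cases hp2 : p = 2
  · subst hp2
    set W : ℝ → ℝ := fun s => area ψ N s * deriv u s with hW
    have hWd : ∀ s ∈ Ioo (0:ℝ) 1, HasDerivAt W (-(lam * (area ψ N s * h (u s)))) s := by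
      intro s hs
      have hψd : DifferentiableAt ℝ ψ s :=
        (hψ.differentiableOn one_ne_zero).differentiableAt (isOpen_Ioo.mem_nhds hs)
      refine ((area_hasDerivAt hN hψd (hψpos s hs)).mul (hudd s hs)).congr_deriv ?_
      have := hueq s hs
      norm_num at this
      linear_combination (-area ψ N s) * this
    have hanti : StrictAntiOn W (Ioo 0 1) := by
      refine strictAntiOn_of_deriv_neg (convex_Ioo 0 1)
        (fun s hs => (hWd s hs).continuousAt.continuousWithinAt) fun s hs => ?_
      rw [interior_Ioo] at hs
      rw [(hWd s hs).deriv]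
      have h1 := D.a_pos s ⟨hs.1, hs.2.le⟩
      have h2 := D.h_pos (hupos s hs).le
      have : 0 < lam * (area ψ N s * h (u s)) := by positivity
      linarith
    have hρ : r / 2 ∈ Ioo (0:ℝ) 1 := ⟨by linarith [hr.1], by linarith [hr.1, hr.2]⟩
    set ρ := r / 2 with hρdef
    have hWρ : 0 < W ρ := by
      have h1 : W r < W ρ := hanti hρ hr (by rw [hρdef]; linarith [hr.1])
      have h2 : 0 ≤ W r := mul_nonneg (D.a_pos r ⟨hr.1, hr.2.le⟩).le hcon
      linarith
    have hCpos : 0 < C := by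
      have h1 := hC ρ hρ
      have h2 := hψpos ρ hρ
      by_contra hneg
      nlinarith [hρ.1]
    set c := W ρ / C ^ (N - 1) with hc
    have hcpos : 0 < c := by positivity
    have hlow : ∀ s ∈ Ioc (0:ℝ) ρ, c / s ≤ deriv u s := by
      intro s hs
      have hs1 : s ∈ Ioo (0:ℝ) 1 := ⟨hs.1, hs.2.trans_lt hρ.2⟩
      have h1 : W ρ ≤ W s := hanti.antitoneOn hs1 hρ hs.2
      have ha := D.a_pos s ⟨hs1.1, hs1.2.le⟩
      have hdpos : 0 < deriv u s := by
        by_contra hneg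
        rw [not_lt] at hneg
        have : W s ≤ 0 := mul_nonpos_of_nonneg_of_nonpos ha.le hneg
        linarith
      have h2 : area ψ N s ≤ C ^ (N - 1) * s := by
        have h3 : area ψ N s ≤ (C * s) ^ (N - 1) :=
          pow_le_pow_left₀ (hψpos s hs1).le (hC s hs1) _
        have h4 : s ^ (N - 1) ≤ s := pow_le_of_le_one hs1.1.le hs1.2.le (by omega)
        rw [mul_pow] at h3
        exact h3.trans (by gcongr)
      rw [hc, div_div, div_le_iff₀ (mul_pos (pow_pos hCpos _) hs.1)]
      calc W ρ ≤ area ψ N s * deriv u s := h1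
        _ ≤ C ^ (N - 1) * s * deriv u s := by gcongr
        _ = _ := by ring
    have hmono : MonotoneOn (fun s => u s - c * Real.log s) (Ioc 0 ρ) := by
      have hd : ∀ s ∈ Ioc (0:ℝ) ρ,
          HasDerivAt (fun s => u s - c * Real.log s) (deriv u s - c * s⁻¹) s := fun s hs =>
        (hud s ⟨hs.1, hs.2.trans_lt hρ.2⟩).sub ((Real.hasDerivAt_log hs.1.ne').const_mul c)
      refine monotoneOn_of_deriv_nonneg (convex_Ioc 0 ρ)
        (fun s hs => (hd s hs).continuousAt.continuousWithinAt)
        (fun s hs => ((hd s (interior_subset hs)).differentiableAt).differentiableWithinAt)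
        fun s hs => ?_
      rw [(hd s (interior_subset hs)).deriv, ← div_eq_mul_inv]
      linarith [hlow s (interior_subset hs)]
    -- At `s = ρ exp (-u(ρ) / c)` the lower bound for the growth of `u` gives `u s ≤ 0`.
    have hs : ρ * Real.exp (-(u ρ / c)) ∈ Ioc (0:ℝ) ρ := by
      refine ⟨mul_pos hρ.1 (Real.exp_pos _), mul_le_of_le_one_right hρ.1.le ?_⟩
      rw [Real.exp_le_one_iff]
      have := hupos ρ hρ
      have : 0 < u ρ / c := by positivity
      linarith
    have h1 := hmono hs ⟨hρ.1, le_rfl⟩ hs.2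
    have h2 := hupos _ ⟨hs.1, hs.2.trans_lt hρ.2⟩
    simp only at h1
    rw [Real.log_mul hρ.1.ne' (Real.exp_pos _).ne', Real.log_exp] at h1
    have h3 : c * (u ρ / c) = u ρ := by field_simp
    nlinarith
  · have hne : ∀ s ∈ Ioo (0:ℝ) 1, deriv u s ≠ 0 := by
      intro s hs h0
      have := hueq s hs
      rw [h0, abs_zero, Real.zero_rpow (sub_ne_zero.2 hp2)] at this
      have h2 : 0 < lam * h (u s) := mul_pos hlam (D.h_pos (hupos s hs).le)
      simp at this
      rcases this with h | h
      · exact hlam.ne' h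
      · exact (D.h_pos (hupos s hs).le).ne' h
    obtain ⟨s, hs, hs'⟩ := exists_deriv_eq_slope u (show (1/2:ℝ) < 1 by norm_num)
      (huc.mono fun t ht => ⟨by linarith [ht.1], ht.2⟩)
      (fun t ht => (hud t ⟨by linarith [ht.1], ht.2⟩).differentiableAt.differentiableWithinAt)
    have hs1 : s ∈ Ioo (0:ℝ) 1 := ⟨by linarith [hs.1], hs.2⟩
    have hneg : deriv u s < 0 := by
      have := hupos (1/2) (by norm_num)
      rw [hs', hu1]
      norm_num
      linarith
    obtain ⟨t, ht, ht0⟩ := isPreconnected_Ioo.intermediate_value hs1 hr hu'.continuousOn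
      (show (0:ℝ) ∈ Icc (deriv u s) (deriv u r) from ⟨hneg.le, hcon⟩)
    exact hne t ht ht0

/-- A radial Dirichlet solution is an admissible supersolution for the solution operator. Its flux
`ψ^{N-1} (-u')^{p-1}` is positive with derivative `lam ψ^{N-1} h(u)`; hence the source is integrable
up to the origin, and what may be left over is a nonnegative flux at the origin, which a singular
solution can have. -/
lemma IsSol.super (hN : 2 ≤ N) (hp1 : 1 < p) (hψ : ContDiffOn ℝ 1 ψ (Ioo 0 1))
    (hψpos : ∀ r ∈ Ioo (0:ℝ) 1, 0 < ψ r) {C : ℝ} (hC : ∀ r ∈ Ioo (0:ℝ) 1, ψ r ≤ C * r)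
    (D : Data (area ψ N) h (1 / (p - 1))) (hlam : 0 < lam) (hu : IsSol N p ψ h lam u) :
    Adm (area ψ N) h u ∧
      ∀ r ∈ Ioc (0:ℝ) 1, solve (area ψ N) h (1 / (p - 1)) lam u r ≤ u r := by
  have hp : 0 < p - 1 := by linarith
  have hneg : ∀ r ∈ Ioo (0:ℝ) 1, deriv u r < 0 := fun r hr => hu.deriv_neg hN hψ hψpos hC D hlam hr
  obtain ⟨hu2, hupos, huc, hu1, hueq⟩ := hu
  have hu' : ContDiffOn ℝ 1 (deriv u) (Ioo 0 1) := by
    rw [show (2 : WithTop ℕ∞) = 1 + 1 by norm_num,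
      contDiffOn_succ_iff_deriv_of_isOpen isOpen_Ioo] at hu2
    exact hu2.2.2
  have hud : ∀ s ∈ Ioo (0:ℝ) 1, HasDerivAt u (deriv u s) s := fun s hs =>
    ((hu2.differentiableOn two_ne_zero).differentiableAt (isOpen_Ioo.mem_nhds hs)).hasDerivAt
  have hudd : ∀ s ∈ Ioo (0:ℝ) 1, HasDerivAt (deriv u) (deriv (deriv u) s) s := fun s hs =>
    ((hu'.differentiableOn one_ne_zero).differentiableAt (isOpen_Ioo.mem_nhds hs)).hasDerivAt
  have hunn : ∀ r ∈ Ioc (0:ℝ) 1, 0 ≤ u r := fun r hr => by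
    rcases hr.2.lt_or_eq with h1 | h1
    · exact (hupos r ⟨hr.1, h1⟩).le
    · rw [h1, hu1]
  set a := area ψ N with ha
  set f : ℝ → ℝ := fun t => a t * h (u t) with hf
  have hfc : ContinuousOn f (Ioc 0 1) := D.source_cont huc hunn
  have hfpos : ∀ t ∈ Ioc (0:ℝ) 1, 0 < f t := fun t ht => D.source_pos hunn ht
  have hfint : ∀ ε s : ℝ, 0 < ε → s ≤ 1 → IntegrableOn f (Ioc ε s) := fun ε s hε hs =>
    (hfc.mono fun t ht => ⟨hε.trans_le ht.1, ht.2.trans hs⟩).integrableOn_Icc.mono_set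
      Ioc_subset_Icc_self
  set G : ℝ → ℝ := fun s => a s * (-deriv u s) ^ (p - 1) with hG
  have hGpos : ∀ s ∈ Ioo (0:ℝ) 1, 0 < G s := fun s hs =>
    mul_pos (D.a_pos s ⟨hs.1, hs.2.le⟩) (Real.rpow_pos_of_pos (by linarith [hneg s hs]) _)
  have hGd : ∀ s ∈ Ioo (0:ℝ) 1, HasDerivAt G (lam * f s) s := by
    intro s hs
    have hψd : DifferentiableAt ℝ ψ s :=
      (hψ.differentiableOn one_ne_zero).differentiableAt (isOpen_Ioo.mem_nhds hs)
    have hpos : 0 < -deriv u s := by linarith [hneg s hs]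
    refine ((area_hasDerivAt hN hψd (hψpos s hs)).mul
      ((hudd s hs).neg.rpow_const (p := p - 1) (Or.inl hpos.ne'))).congr_deriv ?_
    have he := hueq s hs
    have hsplit : (-deriv u s) ^ (p - 1) = (-deriv u s) ^ (p - 2) * (-deriv u s) := by
      rw [show p - 1 = (p - 2) + 1 by ring, Real.rpow_add hpos, Real.rpow_one]
    rw [abs_of_neg (hneg s hs)] at he
    simp only [Pi.neg_apply]
    rw [show p - 1 - 1 = p - 2 by ring, hsplit, hf, ← ha]
    linear_combination a s * he
  have hFTC : ∀ ε s : ℝ, 0 < ε → ε ≤ s → s < 1 → lam * ∫ t in ε..s, f t = G s - G ε := by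
    intro ε s hε hεs hs
    rw [← intervalIntegral.integral_const_mul]
    refine intervalIntegral.integral_eq_sub_of_hasDerivAt (fun t ht => ?_) ?_
    · rw [uIcc_of_le hεs] at ht
      exact hGd t ⟨hε.trans_le ht.1, ht.2.trans_lt hs⟩
    · exact ((intervalIntegrable_iff_integrableOn_Ioc_of_le hεs).2
        (hfint ε s hε hs.le)).const_mul lam
  have hint : IntegrableOn f (Ioc 0 1) := by
    have h1 : IntegrableOn f (Ioc 0 (1/2)) := by
      refine integrableOn_Ioc_of_intervalIntegral_norm_bounded_left
        (a := fun k : ℕ => 1 / ((k:ℝ) + 1)) (I := G (1/2) / lam)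
        (fun k => hfint _ _ (by positivity) (by norm_num))
        tendsto_one_div_add_atTop_nhds_zero_nat ?_
      filter_upwards [eventually_ge_atTop 1] with k hk
      have hk1 : (1:ℝ) ≤ k := by exact_mod_cast hk
      set ε : ℝ := 1 / ((k:ℝ) + 1) with hε
      have hε0 : 0 < ε := by positivity
      have hε1 : ε ≤ 1/2 := by
        rw [hε]; exact one_div_le_one_div_of_le (by norm_num) (by linarith)
      have h2 : ∫ x in Ioc ε (1/2), ‖f x‖ = ∫ x in Ioc ε (1/2), f x :=
        setIntegral_congr_fun measurableSet_Ioc fun x hx =>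
          Real.norm_of_nonneg (hfpos x ⟨hε0.trans hx.1, by linarith [hx.2]⟩).le
      rw [h2, ← intervalIntegral.integral_of_le hε1, le_div_iff₀ hlam, mul_comm,
        hFTC ε _ hε0 hε1 (by norm_num)]
      linarith [hGpos ε ⟨hε0, by linarith⟩]
    rw [← Ioc_union_Ioc_eq_Ioc (show (0:ℝ) ≤ 1/2 by norm_num) (show (1/2:ℝ) ≤ 1 by norm_num)]
    exact h1.union (hfint _ _ (by norm_num) le_rfl)
  have hA : Adm a h u := ⟨huc, hunn, hint⟩
  have hflux : ∀ s ∈ Ioo (0:ℝ) 1, lam * flux a h u s ≤ G s := by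
    intro s hs
    have h0 : Tendsto (fun ε => G s + lam * flux a h u ε) (nhdsWithin 0 (Ioo 0 s))
        (nhds (G s + lam * flux a h u 0)) := by
      refine ((((flux_cont hint) 0 ⟨le_rfl, zero_le_one⟩).mono ?_).tendsto.const_mul lam).const_add
        (G s)
      exact fun t ht => ⟨ht.1.le, ht.2.le.trans hs.2.le⟩
    have hz : flux a h u 0 = 0 := by simp [flux]
    rw [hz, mul_zero, add_zero] at h0
    have : (nhdsWithin (0:ℝ) (Ioo 0 s)).NeBot := by
      rw [nhdsWithin_Ioo_eq_nhdsGT hs.1]; infer_instance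
    refine ge_of_tendsto h0 (eventually_mem_nhdsWithin.mono fun ε hε => ?_)
    have h1 : flux a h u ε + ∫ t in ε..s, f t = flux a h u s :=
      intervalIntegral.integral_add_adjacent_intervals
        (intervalIntegrable_of_int hint le_rfl hε.1.le (hε.2.le.trans hs.2.le))
        (intervalIntegrable_of_int hint hε.1.le hε.2.le hs.2.le)
    have h2 := hFTC ε s hε.1 hε.2.le hs.2
    have h3 := hGpos ε ⟨hε.1, hε.2.trans hs.2⟩
    rw [← h1, mul_add, h2]
    linarith
  have hsteep : ∀ s ∈ Ioo (0:ℝ) 1, steep a h (1 / (p - 1)) lam u s ≤ -deriv u s := by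
    intro s hs
    have hpos : 0 < -deriv u s := by linarith [hneg s hs]
    have has := D.a_pos s ⟨hs.1, hs.2.le⟩
    have hfl := flux_pos D hA ⟨hs.1, hs.2.le⟩
    have h1 : lam * flux a h u s / a s ≤ (-deriv u s) ^ (p - 1) := by
      rw [div_le_iff₀ has, mul_comm _ (a s)]
      exact hflux s hs
    calc steep a h (1 / (p - 1)) lam u s ≤ ((-deriv u s) ^ (p - 1)) ^ (1 / (p - 1)) :=
          Real.rpow_le_rpow (by positivity) h1 D.q_pos.le
      _ = -deriv u s := by
          rw [← Real.rpow_mul hpos.le, mul_one_div_cancel hp.ne', Real.rpow_one]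
  refine ⟨hA, fun r hr => ?_⟩
  have hmono : MonotoneOn (fun s => solve a h (1 / (p - 1)) lam u s - u s) (Ioc 0 1) := by
    have hd : ∀ s ∈ Ioo (0:ℝ) 1, HasDerivAt (fun s => solve a h (1 / (p - 1)) lam u s - u s)
        (-steep a h (1 / (p - 1)) lam u s - deriv u s) s := fun s hs =>
      (solve_hasDerivAt D hA hs).sub (hud s hs)
    refine monotoneOn_of_deriv_nonneg (convex_Ioc 0 1) ((solve_cont D hint).sub huc) ?_ ?_
    · rw [interior_Ioc]
      exact fun s hs => (hd s hs).differentiableAt.differentiableWithinAt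
    · rw [interior_Ioc]
      intro s hs
      rw [(hd s hs).deriv]
      linarith [hsteep s hs]
  have h1 := hmono hr ⟨one_pos, le_rfl⟩ hr.2
  have h2 : solve a h (1 / (p - 1)) lam u 1 = 0 := by simp [solve]
  simp only [h2, hu1] at h1
  linarith

/-- Solvability is inherited by smaller parameters. -/
lemma IsSol.down (hN : 2 ≤ N) (hp1 : 1 < p) (hψ : ContDiffOn ℝ 1 ψ (Ioo 0 1))
    (hψpos : ∀ r ∈ Ioo (0:ℝ) 1, 0 < ψ r) {C : ℝ} (hC : ∀ r ∈ Ioo (0:ℝ) 1, ψ r ≤ C * r)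
    (D : Data (area ψ N) h (1 / (p - 1))) (hmu : 0 < mu) (hml : mu ≤ lam)
    (hu : IsSol N p ψ h lam u) : ∃ v, IsSol N p ψ h mu v := by
  obtain ⟨hA, hs⟩ := hu.super hN hp1 hψ hψpos hC D (hmu.trans_le hml)
  obtain ⟨v, hv, hfix⟩ := exists_fixed D hmu hA fun r hr =>
    (solve_mono D hmu hml hA hA (fun _ _ => le_rfl) hr).trans (hs r hr)
  exact ⟨v, isSol_of_fixed hN hp1 hψ hψpos D hmu hv hfix⟩

/-! ### The set of solvable parameters -/

/-- For small parameters the constant `1` is a supersolution, because the mean of `ψ^{N-1}` over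
`(0, s)` is controlled by `ψ(s)^{N-1}`. -/
lemma exists_isSol_small (hN : 2 ≤ N) (hp1 : 1 < p) (hψ : ContDiffOn ℝ 1 ψ (Ioo 0 1))
    (hψpos : ∀ r ∈ Ioc (0:ℝ) 1, 0 < ψ r) {c C : ℝ} (hc0 : 0 < c)
    (hc : ∀ r ∈ Ioc (0:ℝ) 1, c * r ≤ ψ r) (hC : ∀ r ∈ Ioc (0:ℝ) 1, ψ r ≤ C * r)
    (D : Data (area ψ N) h (1 / (p - 1))) :
    ∃ lam, 0 < lam ∧ ∃ v, IsSol N p ψ h lam v := by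
  have hCpos : 0 < C := by
    have h1 := hc 1 ⟨one_pos, le_rfl⟩
    have h2 := hC 1 ⟨one_pos, le_rfl⟩
    linarith
  have hh1 : 0 < h 1 := D.h_pos zero_le_one
  set M := (C / c) ^ (N - 1) with hM
  have hMpos : 0 < M := by positivity
  set lam := 1 / (h 1 * M) with hlam
  have hlpos : 0 < lam := by positivity
  have hA : Adm (area ψ N) h (fun _ => 1) := by
    refine ⟨continuousOn_const, fun _ _ => zero_le_one, ?_⟩
    exact ((D.a_cont.mul continuousOn_const).integrableOn_Icc).mono_set Ioc_subset_Icc_self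
  refine ⟨lam, hlpos, ?_⟩
  have hst : ∀ s ∈ Ioc (0:ℝ) 1, steep (area ψ N) h (1 / (p - 1)) lam (fun _ => 1) s ≤ 1 := by
    intro s hs
    have has := D.a_pos s hs
    have hfl := flux_pos D hA hs
    refine Real.rpow_le_one (by positivity) ?_ D.q_pos.le
    rw [div_le_one has]
    have h1 : flux (area ψ N) h (fun _ => 1) s ≤ ∫ _ in (0:ℝ)..s, M * area ψ N s * h 1 := by
      refine intervalIntegral.integral_mono_on_of_le_Ioo hs.1.le
        (intervalIntegrable_of_int hA.int le_rfl hs.1.le hs.2) (by simp) fun t ht => ?_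
      refine mul_le_mul_of_nonneg_right ?_ hh1.le
      have ht1 : t ∈ Ioc (0:ℝ) 1 := ⟨ht.1, ht.2.le.trans hs.2⟩
      rw [hM, area, area, ← mul_pow]
      refine pow_le_pow_left₀ (hψpos t ht1).le ?_ _
      calc ψ t ≤ C * t := hC t ht1
        _ ≤ C * s := by gcongr; exact ht.2.le
        _ = C / c * (c * s) := by field_simp
        _ ≤ C / c * ψ s := by gcongr; exact hc s hs
    rw [intervalIntegral.integral_const, smul_eq_mul, sub_zero] at h1
    have h2 : s * (M * area ψ N s * h 1) ≤ M * area ψ N s * h 1 :=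
      mul_le_of_le_one_left (by positivity) hs.2
    calc lam * flux (area ψ N) h (fun _ => 1) s ≤ lam * (M * area ψ N s * h 1) := by
          gcongr; exact h1.trans h2
      _ = area ψ N s := by rw [hlam]; field_simp
  obtain ⟨v, hv, hfix⟩ := exists_fixed D hlpos hA fun r hr => by
    calc solve (area ψ N) h (1 / (p - 1)) lam (fun _ => 1) r ≤ ∫ _ in r..1, (1:ℝ) :=
          intervalIntegral.integral_mono_on hr.2
            (steep_intervalIntegrable D hA.int hr.1 hr.2 le_rfl) (by simp)
            fun s hs => hst s ⟨hr.1.trans_le hs.1, hs.2⟩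
      _ = 1 - r := by simp
      _ ≤ 1 := by linarith [hr.1]
  exact ⟨v, isSol_of_fixed hN hp1 hψ (fun r hr => hψpos r ⟨hr.1, hr.2.le⟩) D hlpos hv hfix⟩

/-- If `h(t) ≥ m t^{p-1}` with `m > 0`, solutions exist for a bounded set of parameters only: the
flux created in the inner half of the ball makes a solution `u` drop from radius `1/2` to radius
`1` by at least a multiple of `lam^{1/(p-1)} u(1/2)`. -/
lemma bddAbove_lam (hN : 2 ≤ N) (hp1 : 1 < p) (hψ : ContDiffOn ℝ 1 ψ (Ioo 0 1))
    (hψpos : ∀ r ∈ Ioo (0:ℝ) 1, 0 < ψ r) {C : ℝ} (hC : ∀ r ∈ Ioo (0:ℝ) 1, ψ r ≤ C * r)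
    (D : Data (area ψ N) h (1 / (p - 1))) {m : ℝ} (hm : 0 < m)
    (hhm : ∀ t, 0 ≤ t → m * t ^ (p - 1) ≤ h t) :
    ∃ L, ∀ lam, 0 < lam → (∃ u, IsSol N p ψ h lam u) → lam ≤ L := by
  have hp : 0 < p - 1 := by linarith
  have hI : Icc (1/2:ℝ) 1 ⊆ Icc 0 1 := Icc_subset_Icc (by norm_num) le_rfl
  obtain ⟨x, hx, hxmax⟩ := isCompact_Icc.exists_isMaxOn
    (nonempty_Icc.2 (show (1/2:ℝ) ≤ 1 by norm_num)) (D.a_cont.mono hI)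
  set B := area ψ N x with hB
  have hBpos : 0 < B := D.a_pos x ⟨by linarith [hx.1], hx.2⟩
  have hBle : ∀ s ∈ Icc (1/2:ℝ) 1, area ψ N s ≤ B := fun s hs => hxmax hs
  have haint : IntegrableOn (area ψ N) (Ioc 0 1) :=
    D.a_cont.integrableOn_Icc.mono_set Ioc_subset_Icc_self
  set A := ∫ t in (0:ℝ)..(1/2), area ψ N t with hAdef
  have hApos : 0 < A := intervalIntegral.intervalIntegral_pos_of_pos_on
    (intervalIntegrable_of_int haint le_rfl (by norm_num) (by norm_num))
    (fun t ht => D.a_pos t ⟨ht.1, by linarith [ht.2]⟩) (by norm_num)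
  refine ⟨2 ^ (p - 1) * B / (A * m), fun lam hlam => ?_⟩
  rintro ⟨u, hu⟩
  obtain ⟨hA, hsup⟩ := hu.super hN hp1 hψ hψpos hC D hlam
  have hanti : StrictAntiOn u (Ioo 0 1) := by
    refine strictAntiOn_of_deriv_neg (convex_Ioo 0 1)
      (hu.2.2.1.mono Ioo_subset_Ioc_self) fun s hs => ?_
    rw [interior_Ioo] at hs
    exact hu.deriv_neg hN hψ hψpos hC D hlam hs
  have hhalf : (1/2:ℝ) ∈ Ioo (0:ℝ) 1 := by norm_num
  set y := u (1/2) with hy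
  have hypos : 0 < y := hu.2.1 _ hhalf
  have hfl : A * (m * y ^ (p - 1)) ≤ flux (area ψ N) h u (1/2) := by
    rw [hAdef, ← intervalIntegral.integral_mul_const]
    refine intervalIntegral.integral_mono_on_of_le_Ioo (by norm_num)
      ((intervalIntegrable_of_int haint le_rfl (by norm_num) (by norm_num)).mul_const _)
      (intervalIntegrable_of_int hA.int le_rfl (by norm_num) (by norm_num)) fun t ht => ?_
    have ht1 : t ∈ Ioo (0:ℝ) 1 := ⟨ht.1, ht.2.trans (by norm_num)⟩
    refine mul_le_mul_of_nonneg_left ?_ (D.a_pos t ⟨ht1.1, ht1.2.le⟩).le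
    exact (hhm y hypos.le).trans
      (D.h_mono hypos.le (hu.2.1 t ht1).le (hanti.antitoneOn ht1 hhalf ht.2.le))
  set κ := (lam * (A * m) / B) ^ (1 / (p - 1)) with hκ
  have hst : ∀ s ∈ Icc (1/2:ℝ) 1, κ * y ≤ steep (area ψ N) h (1 / (p - 1)) lam u s := by
    intro s hs
    have hs1 : s ∈ Ioc (0:ℝ) 1 := ⟨by linarith [hs.1], hs.2⟩
    have has := D.a_pos s hs1
    have h1 : flux (area ψ N) h u (1/2) ≤ flux (area ψ N) h u s :=
      flux_mono_radius D hA (by norm_num) hs.1 hs.2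
    have hyp : 0 < y ^ (p - 1) := Real.rpow_pos_of_pos hypos _
    have h2 : κ * y = (lam * (A * (m * y ^ (p - 1))) / B) ^ (1 / (p - 1)) := by
      rw [show lam * (A * (m * y ^ (p - 1))) / B = lam * (A * m) / B * y ^ (p - 1) by ring,
        Real.mul_rpow (by positivity) hyp.le, ← Real.rpow_mul hypos.le,
        mul_one_div_cancel hp.ne', Real.rpow_one]
    rw [h2]
    refine Real.rpow_le_rpow (by positivity) ?_ D.q_pos.le
    have h3 := hfl.trans h1
    have h4 := hBle s hs
    have h5 := (flux_pos D hA hs1)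
    gcongr
  have h1 : ∫ _ in (1/2:ℝ)..1, κ * y ≤ solve (area ψ N) h (1 / (p - 1)) lam u (1/2) :=
    intervalIntegral.integral_mono_on (by norm_num) (by simp)
      (steep_intervalIntegrable D hA.int (by norm_num) (by norm_num) le_rfl) hst
  have h2 := h1.trans (hsup (1/2) ⟨hhalf.1, hhalf.2.le⟩)
  rw [intervalIntegral.integral_const, smul_eq_mul] at h2
  have h3 : κ ≤ 2 := by
    by_contra hcon
    rw [not_le] at hcon
    rw [← hy] at h2
    nlinarith
  have hb : 0 ≤ lam * (A * m) / B := by positivity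
  have h4 : κ ^ (p - 1) = lam * (A * m) / B := by
    rw [hκ, ← Real.rpow_mul hb, one_div_mul_cancel hp.ne', Real.rpow_one]
  have h5 : κ ^ (p - 1) ≤ 2 ^ (p - 1) :=
    Real.rpow_le_rpow (Real.rpow_nonneg hb _) h3 hp.le
  rw [h4, div_le_iff₀ hBpos] at h5
  rwa [le_div_iff₀ (by positivity)]

/-- The only consequence of superlinearity that is needed for the upper bound on parameters. -/
lemma exists_lower_bound (hp1 : 1 < p) (hmono : MonotoneOn h (Ici 0)) (hh0 : 0 < h 0)
    (hsuper : Tendsto (fun t => h t / t ^ (p - 1)) atTop atTop) :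
    ∃ m, 0 < m ∧ ∀ t, 0 ≤ t → m * t ^ (p - 1) ≤ h t := by
  obtain ⟨t₀, ht₀⟩ := eventually_atTop.1 (hsuper.eventually_ge_atTop 1)
  set T := max t₀ 1 with hT
  have hT1 : 1 ≤ T := le_max_right _ _
  have hTp : 0 < T ^ (p - 1) := Real.rpow_pos_of_pos (by linarith) _
  refine ⟨min 1 (h 0 / T ^ (p - 1)), lt_min one_pos (by positivity), fun t ht => ?_⟩
  have htp : 0 ≤ t ^ (p - 1) := Real.rpow_nonneg ht _
  rcases le_total T t with h1 | h1
  · have htp' : 0 < t ^ (p - 1) := Real.rpow_pos_of_pos (by linarith) _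
    have h2 := ht₀ t ((le_max_left _ _).trans h1)
    rw [le_div_iff₀ htp'] at h2
    exact (mul_le_mul_of_nonneg_right (min_le_left _ _) htp).trans h2
  · calc _ ≤ h 0 / T ^ (p - 1) * T ^ (p - 1) :=
          mul_le_mul (min_le_right _ _) (Real.rpow_le_rpow ht h1 (by linarith)) htp (by positivity)
      _ = h 0 := by field_simp
      _ ≤ h t := hmono (mem_Ici.2 le_rfl) ht ht

/-- The warping function is comparable to the radius. -/
lemma exists_warp_bounds (hψ : ContinuousOn ψ (Icc 0 1)) (hψ0 : ψ 0 = 0) (hψ'0 : deriv ψ 0 = 1)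
    (hψpos : ∀ r ∈ Ioc (0:ℝ) 1, 0 < ψ r) :
    ∃ c C, 0 < c ∧ ∀ r ∈ Ioc (0:ℝ) 1, c * r ≤ ψ r ∧ ψ r ≤ C * r := by
  -- A nonzero value of `deriv` is not a junk value.
  have hd : DifferentiableAt ℝ ψ 0 := differentiableAt_of_deriv_ne_zero (by rw [hψ'0]; norm_num)
  have hcont : ContinuousOn (dslope ψ 0) (Icc 0 1) := by
    intro r hr
    rcases eq_or_ne r 0 with rfl | hne
    · exact (continuousAt_dslope_same.2 hd).continuousWithinAt
    · exact (continuousWithinAt_dslope_of_ne hne).2 (hψ r hr)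
  have heq : ∀ r ∈ Ioc (0:ℝ) 1, ψ r = dslope ψ 0 r * r := fun r hr => by
    rw [dslope_of_ne _ hr.1.ne', slope_def_field, hψ0, sub_zero, sub_zero]
    have := hr.1.ne'
    field_simp
  have hpos : ∀ r ∈ Icc (0:ℝ) 1, 0 < dslope ψ 0 r := fun r hr => by
    rcases hr.1.eq_or_lt with rfl | h0
    · rw [dslope_same, hψ'0]; exact one_pos
    · exact pos_of_mul_pos_left (heq r ⟨h0, hr.2⟩ ▸ hψpos r ⟨h0, hr.2⟩) h0.le
  obtain ⟨x, hx, hxmin⟩ := isCompact_Icc.exists_isMinOn (nonempty_Icc.2 zero_le_one) hcont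
  obtain ⟨y, hy, hymax⟩ := isCompact_Icc.exists_isMaxOn (nonempty_Icc.2 zero_le_one) hcont
  refine ⟨dslope ψ 0 x, dslope ψ 0 y, hpos x hx, fun r hr => ?_⟩
  have hr' : r ∈ Icc (0:ℝ) 1 := ⟨hr.1.le, hr.2⟩
  rw [heq r hr]
  exact ⟨mul_le_mul_of_nonneg_right (hxmin hr') hr.1.le,
    mul_le_mul_of_nonneg_right (hymax hr') hr.1.le⟩

end Gelfand

/-- Theorem 2, existence of the extremal parameter: there exists
λ* ∈ (0,∞) such that the radial Dirichlet problem with parameter λ admits a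
solution for every 0 < λ < λ* and admits no solution for λ > λ*. -/
theorem extremal_parameter
    (N : ℕ) (hN : 2 ≤ N) (p : ℝ) (hp1 : 1 < p) (hpN : p ≤ N)
    (ψ : ℝ → ℝ) (hψ : ContDiffOn ℝ (⊤ : ℕ∞) ψ (Set.Icc 0 1))
    (hψ0 : ψ 0 = 0) (hψ'0 : deriv ψ 0 = 1) (hψ''0 : deriv (deriv ψ) 0 = 0)
    (hψpos : ∀ r ∈ Set.Ioo (0:ℝ) 1, 0 < ψ r) (hψ1 : 0 < ψ 1)
    (h : ℝ → ℝ) (hh : ContDiffOn ℝ 1 h (Set.Ici 0))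
    (hmono : StrictMonoOn h (Set.Ici 0)) (hh0 : 0 < h 0)
    (hsuper : Tendsto (fun t => h t / t ^ (p - 1)) atTop atTop) :
    ∃ lamStar : ℝ, 0 < lamStar ∧
      (∀ lam : ℝ, 0 < lam → lam < lamStar →
        ∃ u : ℝ → ℝ,
          ContDiffOn ℝ 2 u (Set.Ioo 0 1) ∧
          (∀ r ∈ Set.Ioo (0:ℝ) 1, 0 < u r) ∧
          ContinuousOn u (Set.Ioc 0 1) ∧
          u 1 = 0 ∧
          ∀ r ∈ Set.Ioo (0:ℝ) 1,
            -(p - 1) * |deriv u r| ^ (p - 2) * deriv (deriv u) r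
              - ((N : ℝ) - 1) * (deriv ψ r / ψ r) * |deriv u r| ^ (p - 2) * deriv u r
              = lam * h (u r)) ∧
      (∀ lam : ℝ, lamStar < lam →
        ¬ ∃ u : ℝ → ℝ,
          ContDiffOn ℝ 2 u (Set.Ioo 0 1) ∧
          (∀ r ∈ Set.Ioo (0:ℝ) 1, 0 < u r) ∧
          ContinuousOn u (Set.Ioc 0 1) ∧
          u 1 = 0 ∧
          ∀ r ∈ Set.Ioo (0:ℝ) 1,
            -(p - 1) * |deriv u r| ^ (p - 2) * deriv (deriv u) r
              - ((N : ℝ) - 1) * (deriv ψ r / ψ r) * |deriv u r| ^ (p - 2) * deriv u r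
              = lam * h (u r)) := by
  have hψposC : ∀ r ∈ Ioc (0:ℝ) 1, 0 < ψ r := fun r hr => by
    rcases hr.2.lt_or_eq with h1 | h1
    · exact hψpos r ⟨hr.1, h1⟩
    · rw [h1]; exact hψ1
  have hψC : ContDiffOn ℝ 1 ψ (Ioo 0 1) :=
    (hψ.of_le (by exact_mod_cast le_top)).mono Ioo_subset_Icc_self
  have D : Gelfand.Data (Gelfand.area ψ N) h (1 / (p - 1)) :=
    ⟨hψ.continuousOn.pow _, fun s hs => pow_pos (hψposC s hs) _, hh.continuousOn,
      hmono.monotoneOn, hh0, one_div_pos.2 (by linarith)⟩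
  obtain ⟨c, C, hc0, hcC⟩ := Gelfand.exists_warp_bounds hψ.continuousOn hψ0 hψ'0 hψposC
  have hC : ∀ r ∈ Ioo (0:ℝ) 1, ψ r ≤ C * r := fun r hr => (hcC r ⟨hr.1, hr.2.le⟩).2
  obtain ⟨m, hm, hhm⟩ := Gelfand.exists_lower_bound hp1 hmono.monotoneOn hh0 hsuper
  obtain ⟨L, hL⟩ := Gelfand.bddAbove_lam hN hp1 hψC hψpos hC D hm hhm
  obtain ⟨lam₀, hlam₀, v₀, hv₀⟩ := Gelfand.exists_isSol_small hN hp1 hψC hψposC hc0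
    (fun r hr => (hcC r hr).1) (fun r hr => (hcC r hr).2) D
  let S : Set ℝ := {lam | 0 < lam ∧ ∃ u, Gelfand.IsSol N p ψ h lam u}
  have hbdd : BddAbove S := ⟨L, fun lam hlam => hL lam hlam.1 hlam.2⟩
  have hmem : lam₀ ∈ S := ⟨hlam₀, v₀, hv₀⟩
  have hpos : 0 < sSup S := hlam₀.trans_le (le_csSup hbdd hmem)
  refine ⟨sSup S, hpos, fun lam h0 hlt => ?_, fun lam hlt hex => ?_⟩
  · obtain ⟨mu, ⟨-, u, hu⟩, hmu⟩ := exists_lt_of_lt_csSup ⟨lam₀, hmem⟩ hlt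
    exact hu.down hN hp1 hψC hψpos hC D h0 hmu.le
  · exact hlt.not_ge (le_csSup hbdd ⟨hpos.trans hlt, hex⟩)
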